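/- arXiv:math/0501179 — 2 statements merged into one kernel-verified Lean document; each statement's English description precedes it below -/
import Mathlib

section
/- Let M be an acyclic matching on the graph G(C•) of the chain complex C•. Then for every edge (α,β,[α:β]) ∈ M with α ∈ X_{i+1} and β ∈ X_i, and for every critical basis element c ∈ X_{i−1}^M, one has Γ↓(β,c) = Σ_{c' ∈ X_i^M} Γ↑(β,c')·Γ↓(c',c). -/
/-!
Algebraic Discrete Morse theory (Jöllenbeck–Welker).

Setup: `R` is a (possibly noncommutative) ring and `C` is a chain complex of free
left `R`-modules `C i = X i → R` with fixed finite basis `X i` in homological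
degree `i`; the differential is `∂ i (c) = ∑ c', d i c c' • c'` (we record only the
matrix of coefficients `d`).  `M` is a matching on the associated weighted directed
graph, `MStep` describes the edges of the modified graph `G_M`, `MPath` the directed
paths, `Gamma v w` the sum of the weights of all paths from `v` to `w`, `Crit` the
critical basis elements, `DMmap` the Morse differential, and `fmap`, `gmap`, `chimap`
the comparison maps and the homotopy.
-/

attribute [local instance] Classical.propDecidable

noncomputable section

section ADMT

variable {R : Type} [Ring R]
variable (X : ℕ → Type) [∀ i, Fintype (X i)]
variable (d : ∀ i, X (i + 1) → X i → R)
variable (M : ∀ i, Set (X (i + 1) × X i))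

/-- The family of coefficients `d` of the differentials satisfies `∂ ∘ ∂ = 0`,
i.e. `C` is a chain complex. -/
def IsComplexAux : Prop :=
  ∀ (i : ℕ) (c : X (i + 2)) (c'' : X i),
    ∑ c' : X (i + 1), d (i + 1) c c' * d i c' c'' = 0

/-- The edges of the modified graph `G_M`: downward steps along non-matched edges
of the graph `G(C)` (weight `d i c c'`), and upward reversed steps along matched
edges (weight `-(d i c c')⁻¹`). -/
inductive MStep : (Σ i, X i) → (Σ i, X i) → Prop
  | down (i : ℕ) (c : X (i + 1)) (c' : X i) (hne : d i c c' ≠ 0)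
      (hnm : (c, c') ∉ M i) : MStep ⟨i + 1, c⟩ ⟨i, c'⟩
  | up (i : ℕ) (c : X (i + 1)) (c' : X i) (hmem : (c, c') ∈ M i) :
      MStep ⟨i, c'⟩ ⟨i + 1, c⟩

/-- `M` is an acyclic matching: all edges of `M` are edges of the graph `G(C)`,
every vertex lies in at most one edge of `M`, the weights of matched edges are
central units of `R`, and the modified graph `G_M` has no directed cycle. -/
def IsAcyclicMatching : Prop :=
  (∀ (i : ℕ) (c : X (i + 1)) (c' : X i), (c, c') ∈ M i → d i c c' ≠ 0) ∧
  (∀ (i : ℕ) (c : X (i + 1)) (c₁ c₂ : X i), (c, c₁) ∈ M i → (c, c₂) ∈ M i → c₁ = c₂) ∧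
  (∀ (i : ℕ) (c₁ c₂ : X (i + 1)) (c' : X i), (c₁, c') ∈ M i → (c₂, c') ∈ M i → c₁ = c₂) ∧
  (∀ (i : ℕ) (a : X (i + 2)) (b : X (i + 1)) (c : X i),
      (a, b) ∈ M (i + 1) → (b, c) ∈ M i → False) ∧
  (∀ (i : ℕ) (c : X (i + 1)) (c' : X i), (c, c') ∈ M i →
      d i c c' ∈ Set.center R ∧ IsUnit (d i c c')) ∧
  (∀ v : Σ i, X i, ¬ Relation.TransGen (MStep X d M) v v)

/-- Directed paths in the modified graph `G_M`. -/
inductive MPath : (Σ i, X i) → (Σ i, X i) → Type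
  | nil (v : Σ i, X i) : MPath v v
  | down (i : ℕ) (c : X (i + 1)) (c' : X i) (hne : d i c c' ≠ 0)
      (hnm : (c, c') ∉ M i) (w : Σ i, X i) (p : MPath ⟨i, c'⟩ w) :
      MPath ⟨i + 1, c⟩ w
  | up (i : ℕ) (c : X (i + 1)) (c' : X i) (hmem : (c, c') ∈ M i)
      (w : Σ i, X i) (p : MPath ⟨i + 1, c⟩ w) : MPath ⟨i, c'⟩ w

/-- The weight of a path: the product of the weights of its edges.  A non-matched
edge `c → c'` has weight `d i c c'`; a reversed matched edge has weight
`-(d i c c')⁻¹`. -/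
def MPath.weight : ∀ {v w : Σ i, X i}, MPath X d M v w → R
  | _, _, .nil _ => 1
  | _, _, .down i c c' _ _ _ p => d i c c' * MPath.weight p
  | _, _, .up i c c' _ _ p => -(Ring.inverse (d i c c')) * MPath.weight p

/-- The first step of the path decreases the homological degree. -/
def MPath.firstDown : ∀ {v w : Σ i, X i}, MPath X d M v w → Prop
  | _, _, .nil _ => False
  | _, _, .down _ _ _ _ _ _ _ => True
  | _, _, .up _ _ _ _ _ _ => False

/-- The first step of the path increases the homological degree. -/
def MPath.firstUp : ∀ {v w : Σ i, X i}, MPath X d M v w → Prop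
  | _, _, .nil _ => False
  | _, _, .down _ _ _ _ _ _ _ => False
  | _, _, .up _ _ _ _ _ _ => True

/-- `Γ(v,w)`: the sum of the weights of all directed paths from `v` to `w` in `G_M`
(under the acyclicity hypothesis there are only finitely many such paths). -/
def Gamma (v w : Σ i, X i) : R := ∑ᶠ p : MPath X d M v w, MPath.weight X d M p

/-- `Γ↓(v,w)`: the sum of the weights of all paths from `v` to `w` whose first step
decreases the homological degree. -/
def GammaDown (v w : Σ i, X i) : R :=
  ∑ᶠ (p : MPath X d M v w) (_ : MPath.firstDown X d M p), MPath.weight X d M p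

/-- `Γ↑(v,w)`: the sum of the weights of all paths from `v` to `w` whose first step
increases the homological degree. -/
def GammaUp (v w : Σ i, X i) : R :=
  ∑ᶠ (p : MPath X d M v w) (_ : MPath.firstUp X d M p), MPath.weight X d M p

/-- A basis element is critical if it lies in no edge of `M`. -/
def CriticalV (v : Σ i, X i) : Prop :=
  ∀ (j : ℕ) (a : X (j + 1)) (b : X j), (a, b) ∈ M j →
    v ≠ ⟨j + 1, a⟩ ∧ v ≠ ⟨j, b⟩

/-- The critical basis elements of homological degree `i`. -/
abbrev Crit (i : ℕ) := {c : X i // CriticalV X M ⟨i, c⟩}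

/-- The `R`-linear map between free left `R`-modules determined by a matrix of
coefficients. -/
def liftMap {α β : Type} [Fintype α] (w : α → β → R) :
    (α → R) →ₗ[R] (β → R) where
  toFun v b := ∑ a, v a * w a b
  map_add' u v := by
    funext b
    simp [add_mul, Finset.sum_add_distrib]
  map_smul' r v := by
    funext b
    simp [Finset.mul_sum, mul_assoc]

/-- The differential `∂` of the original complex `C`. -/
def Dmap (i : ℕ) : (X (i + 1) → R) →ₗ[R] (X i → R) :=
  liftMap (fun c c' => d i c c')

/-- The Morse differential `∂^M (c) = ∑ Γ(c,c') • c'` on the critical cells. -/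
def DMmap (i : ℕ) : (Crit X M (i + 1) → R) →ₗ[R] (Crit X M i → R) :=
  liftMap (fun c c' => Gamma X d M ⟨i + 1, c.1⟩ ⟨i, c'.1⟩)

/-- The comparison map `f : C → C^M`, `f(c) = ∑ Γ(c,c') • c'`. -/
def fmap (i : ℕ) : (X i → R) →ₗ[R] (Crit X M i → R) :=
  liftMap (fun c c' => Gamma X d M ⟨i, c⟩ ⟨i, c'.1⟩)

/-- The comparison map `g : C^M → C`, `g(c) = ∑ Γ(c,c') • c'`. -/
def gmap (i : ℕ) : (Crit X M i → R) →ₗ[R] (X i → R) :=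
  liftMap (fun c c' => Gamma X d M ⟨i, c.1⟩ ⟨i, c'⟩)

/-- The homotopy `χ : C_i → C_{i+1}`, `χ(c) = ∑ Γ(c,c') • c'`. -/
def chimap (i : ℕ) : (X i → R) →ₗ[R] (X (i + 1) → R) :=
  liftMap (fun c c' => Gamma X d M ⟨i, c⟩ ⟨i + 1, c'⟩)

/-- The vertices reachable from `v` in `G_M`. -/
def reachSet (v : Σ i, X i) : Set (Σ i, X i) :=
  {w | Relation.ReflTransGen (MStep X d M) v w}

theorem reachSet_deg (hM : IsAcyclicMatching X d M) (v w : Σ i, X i)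
    (h : Relation.ReflTransGen (MStep X d M) v w) :
    w.1 ≤ v.1 ∨ (w.1 = v.1 + 1 ∧ ∃ (j : ℕ) (a : X (j + 1)) (b : X j),
      (a, b) ∈ M j ∧ w = ⟨j + 1, a⟩) := by
  obtain ⟨-, -, -, h4, -, -⟩ := hM
  induction h with
  | refl => exact Or.inl le_rfl
  | tail _ hs ih =>
    cases hs with
    | down i c c' hne hnm =>
      left
      rcases ih with ih | ⟨ih, -⟩
      · simp only at ih ⊢; omega
      · simp only at ih ⊢; omega
    | up i c c' hmem =>
      rcases ih with ih | ⟨-, j, a, b, hab, he⟩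
      · simp only at ih ⊢
        by_cases hlt : i + 1 ≤ v.1
        · exact Or.inl hlt
        · exact Or.inr ⟨by omega, i, c, c', hmem, rfl⟩
      · exfalso
        cases he
        exact h4 _ _ _ _ hmem hab

theorem reachSet_finite (hM : IsAcyclicMatching X d M) (v : Σ i, X i) :
    (reachSet X d M v).Finite := by
  apply (Set.finite_range
    (fun p : (Σ i : Fin (v.1 + 2), X i) => (⟨p.1, p.2⟩ : Σ i, X i))).subset
  rintro ⟨n, x⟩ hw
  have hd := reachSet_deg X d M hM v _ hw
  have hn : n < v.1 + 2 := by
    rcases hd with hd | ⟨hd, -⟩ <;> simp only at hd <;> omega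
  exact ⟨⟨⟨n, hn⟩, x⟩, rfl⟩

/-- The size of the reachable set, used as a termination measure. -/
def rank (v : Σ i, X i) : ℕ := (reachSet X d M v).ncard

theorem rank_lt (hM : IsAcyclicMatching X d M) {v w : Σ i, X i}
    (h : MStep X d M v w) : rank X d M w < rank X d M v := by
  apply Set.ncard_lt_ncard _ (reachSet_finite X d M hM v)
  refine ⟨fun u hu => Relation.ReflTransGen.head h hu, fun hsub => ?_⟩
  have hv : Relation.ReflTransGen (MStep X d M) w v := hsub Relation.ReflTransGen.refl
  exact hM.2.2.2.2.2 v (Relation.TransGen.head' h hv)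

theorem finite_path (hM : IsAcyclicMatching X d M) (w : Σ i, X i) :
    ∀ (n : ℕ) (v : Σ i, X i), rank X d M v = n → Finite (MPath X d M v w) := by
  intro n
  induction n using Nat.strong_induction_on with
  | _ n ih =>
  rintro ⟨k, x⟩ hv
  have hup : ∀ z : {z : X (k + 1) // (z, x) ∈ M k},
      Finite (MPath X d M ⟨k + 1, z.1⟩ w) := fun z =>
    ih _ (hv ▸ rank_lt X d M hM (MStep.up k z.1 x z.2)) _ rfl
  have hU : Finite (Σ z : {z : X (k + 1) // (z, x) ∈ M k},
      MPath X d M ⟨k + 1, z.1⟩ w) := inferInstance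
  cases k with
  | zero =>
    apply Finite.of_surjective
      (α := PLift ((⟨0, x⟩ : Σ i, X i) = w) ⊕
        (Σ z : {z : X (0 + 1) // (z, x) ∈ M 0}, MPath X d M ⟨0 + 1, z.1⟩ w))
      (Sum.elim (fun h => h.down ▸ MPath.nil _) (fun q => MPath.up 0 q.1.1 x q.1.2 w q.2))
    intro p
    cases p with
    | nil => exact ⟨Sum.inl ⟨rfl⟩, rfl⟩
    | up _ z _ hz _ q => exact ⟨Sum.inr ⟨⟨z, hz⟩, q⟩, rfl⟩
  | succ k =>
    have hdn : ∀ y : {y : X k // d k x y ≠ 0 ∧ (x, y) ∉ M k},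
        Finite (MPath X d M ⟨k, y.1⟩ w) := fun y =>
      ih _ (hv ▸ rank_lt X d M hM (MStep.down k x y.1 y.2.1 y.2.2)) _ rfl
    apply Finite.of_surjective
      (α := PLift ((⟨k + 1, x⟩ : Σ i, X i) = w) ⊕
        (Σ z : {z : X (k + 1 + 1) // (z, x) ∈ M (k + 1)}, MPath X d M ⟨k + 1 + 1, z.1⟩ w) ⊕
        (Σ y : {y : X k // d k x y ≠ 0 ∧ (x, y) ∉ M k}, MPath X d M ⟨k, y.1⟩ w))
      (Sum.elim (fun h => h.down ▸ MPath.nil _)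
        (Sum.elim (fun q => MPath.up (k + 1) q.1.1 x q.1.2 w q.2)
          (fun q => MPath.down k x q.1.1 q.1.2.1 q.1.2.2 w q.2)))
    intro p
    cases p with
    | nil => exact ⟨Sum.inl ⟨rfl⟩, rfl⟩
    | up _ z _ hz _ q => exact ⟨Sum.inr (Sum.inl ⟨⟨z, hz⟩, q⟩), rfl⟩
    | down _ _ y hne hnm _ q => exact ⟨Sum.inr (Sum.inr ⟨⟨y, hne, hnm⟩, q⟩), rfl⟩

theorem finitePath (hM : IsAcyclicMatching X d M) (v w : Σ i, X i) :
    Finite (MPath X d M v w) := finite_path X d M hM w _ v rfl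

theorem gammaDown_rec (hM : IsAcyclicMatching X d M) (i : ℕ) (x : X (i + 1))
    (w : Σ i, X i) :
    GammaDown X d M ⟨i + 1, x⟩ w =
      ∑ y : X i, if (x, y) ∈ M i then 0 else d i x y * Gamma X d M ⟨i, y⟩ w := by
  have hfin := finitePath X d M hM
  let S := Σ y : {y : X i // d i x y ≠ 0 ∧ (x, y) ∉ M i}, MPath X d M ⟨i, y.1⟩ w
  have hS : Finite S := inferInstance
  let f : S → MPath X d M ⟨i + 1, x⟩ w :=
    fun q => MPath.down i x q.1.1 q.1.2.1 q.1.2.2 w q.2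
  have hbij : Set.BijOn f Set.univ {p | MPath.firstDown X d M p} := by
    refine ⟨fun q _ => trivial, ?_, ?_⟩
    · rintro ⟨⟨y, hy⟩, q⟩ - ⟨⟨y', hy'⟩, q'⟩ - h
      simp only [f] at h
      cases h
      rfl
    · intro p hp
      cases p with
      | nil => exact hp.elim
      | up => exact hp.elim
      | down _ _ y hne hnm _ q => exact ⟨⟨⟨y, hne, hnm⟩, q⟩, trivial, rfl⟩
  have key : GammaDown X d M ⟨i + 1, x⟩ w =
      ∑ᶠ q : S, d i x q.1.1 * MPath.weight X d M q.2 := by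
    have := finsum_mem_eq_of_bijOn f hbij
      (f := fun q => d i x q.1.1 * MPath.weight X d M q.2)
      (g := fun p => MPath.weight X d M p) (fun q _ => rfl)
    rw [finsum_mem_univ] at this
    exact this.symm
  rw [key]
  letI : ∀ v w, Fintype (MPath X d M v w) := fun v w => Fintype.ofFinite _
  rw [finsum_eq_sum_of_fintype, Fintype.sum_sigma]
  simp only [Gamma, finsum_eq_sum_of_fintype, ← Finset.mul_sum]
  have hr : ∀ y : X i, (if (x, y) ∈ M i then 0 else
        d i x y * ∑ p, MPath.weight X d M (v := ⟨i, y⟩) (w := w) p) =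
      if d i x y ≠ 0 ∧ (x, y) ∉ M i then
        d i x y * ∑ p, MPath.weight X d M (v := ⟨i, y⟩) (w := w) p else 0 := by
    intro y
    by_cases h0 : d i x y = 0 <;> by_cases h1 : (x, y) ∈ M i <;> simp [h0, h1]
  rw [Finset.sum_congr rfl (fun y _ => hr y), ← Finset.sum_filter,
    Finset.sum_subtype (p := fun y => d i x y ≠ 0 ∧ (x, y) ∉ M i)]
  intro y
  simp

theorem gammaUp_rec (hM : IsAcyclicMatching X d M) (i : ℕ) (y : X i)
    (w : Σ i, X i) :
    GammaUp X d M ⟨i, y⟩ w =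
      ∑ z : X (i + 1), if (z, y) ∈ M i then
        -(Ring.inverse (d i z y)) * Gamma X d M ⟨i + 1, z⟩ w else 0 := by
  have hfin := finitePath X d M hM
  let S := Σ z : {z : X (i + 1) // (z, y) ∈ M i}, MPath X d M ⟨i + 1, z.1⟩ w
  have hS : Finite S := inferInstance
  let f : S → MPath X d M ⟨i, y⟩ w :=
    fun q => MPath.up i q.1.1 y q.1.2 w q.2
  have hbij : Set.BijOn f Set.univ {p | MPath.firstUp X d M p} := by
    refine ⟨fun q _ => trivial, ?_, ?_⟩
    · rintro ⟨⟨z, hz⟩, q⟩ - ⟨⟨z', hz'⟩, q'⟩ - h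
      simp only [f] at h
      cases h
      rfl
    · intro p hp
      cases p with
      | nil => exact hp.elim
      | down => exact hp.elim
      | up _ z _ hz _ q => exact ⟨⟨⟨z, hz⟩, q⟩, trivial, rfl⟩
  have key : GammaUp X d M ⟨i, y⟩ w =
      ∑ᶠ q : S, -(Ring.inverse (d i q.1.1 y)) * MPath.weight X d M q.2 := by
    have := finsum_mem_eq_of_bijOn f hbij
      (f := fun q => -(Ring.inverse (d i q.1.1 y)) * MPath.weight X d M q.2)
      (g := fun p => MPath.weight X d M p) (fun q _ => rfl)
    rw [finsum_mem_univ] at this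
    exact this.symm
  rw [key]
  letI : ∀ v w, Fintype (MPath X d M v w) := fun v w => Fintype.ofFinite _
  rw [finsum_eq_sum_of_fintype, Fintype.sum_sigma]
  simp only [Gamma, finsum_eq_sum_of_fintype, ← Finset.mul_sum]
  rw [← Finset.sum_filter, Finset.sum_subtype (p := fun z => (z, y) ∈ M i)]
  intro z
  simp

theorem gamma_split (hM : IsAcyclicMatching X d M) (v w : Σ i, X i) :
    Gamma X d M v w =
      (if v = w then 1 else 0) + GammaDown X d M v w + GammaUp X d M v w := by
  have hfin := finitePath X d M hM v w
  letI : Fintype (MPath X d M v w) := Fintype.ofFinite _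
  have hnil : (if v = w then (1 : R) else 0) =
      ∑ p : MPath X d M v w, if ¬ MPath.firstDown X d M p ∧ ¬ MPath.firstUp X d M p then
        MPath.weight X d M p else 0 := by
    split_ifs with h
    · subst h
      rw [Finset.sum_eq_single (MPath.nil v)]
      · simp [MPath.firstDown, MPath.firstUp, MPath.weight]
      · intro p _ hp
        cases p with
        | nil => exact absurd rfl hp
        | down => simp [MPath.firstDown]
        | up => simp [MPath.firstUp]
      · simp
    · symm
      apply Finset.sum_eq_zero
      intro p _
      cases p with
      | nil => exact absurd rfl h
      | down => simp [MPath.firstDown]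
      | up => simp [MPath.firstUp]
  rw [hnil]
  simp only [Gamma, GammaDown, GammaUp, finsum_eq_sum_of_fintype, finsum_eq_if]
  rw [← Finset.sum_add_distrib, ← Finset.sum_add_distrib]
  apply Finset.sum_congr rfl
  intro p _
  cases p <;> simp [MPath.firstDown, MPath.firstUp]

theorem path_to_crit (hM : IsAcyclicMatching X d M) {v w : Σ i, X i}
    (p : MPath X d M v w) (hw : CriticalV X M w) :
    w.1 < v.1 ∨ (w.1 = v.1 ∧ ∀ (j : ℕ) (a : X (j + 1)) (b : X j),
      (a, b) ∈ M j → v ≠ ⟨j + 1, a⟩) := by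
  obtain ⟨-, -, -, h4, -, -⟩ := hM
  induction p with
  | nil v => exact Or.inr ⟨rfl, fun j a b h => (hw j a b h).1⟩
  | down i x y hne hnm w p ih =>
    left
    rcases ih hw with h | ⟨h, -⟩ <;> simp only at h ⊢ <;> omega
  | up i z y hz w p ih =>
    rcases ih hw with h | ⟨-, h⟩
    · simp only at h ⊢
      by_cases hlt : w.1 < i
      · exact Or.inl hlt
      · refine Or.inr ⟨by omega, ?_⟩
        intro j a b hab he
        cases he
        exact h4 _ _ _ _ hz hab
    · exact absurd rfl (h i z y hz)

theorem gammaDown_same (hM : IsAcyclicMatching X d M) (n : ℕ) (y c : X n)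
    (hc : CriticalV X M ⟨n, c⟩) : GammaDown X d M ⟨n, y⟩ ⟨n, c⟩ = 0 := by
  unfold GammaDown
  apply finsum_eq_zero_of_forall_eq_zero
  intro p
  rw [finsum_eq_if, if_neg]
  intro hp
  cases p with
  | nil => exact hp
  | up => exact hp
  | down i x y hne hnm w p =>
    rcases path_to_crit X d M hM p hc with h | ⟨h, -⟩ <;> simp only at h <;> omega

/-- Value of `Γ(y,c)` for `c` critical in the same degree. -/
theorem gamma_same (hM : IsAcyclicMatching X d M) (n : ℕ) (y c : X n)
    (hc : CriticalV X M ⟨n, c⟩) :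
    Gamma X d M ⟨n, y⟩ ⟨n, c⟩ = (if y = c then 1 else 0) + GammaUp X d M ⟨n, y⟩ ⟨n, c⟩ := by
  rw [gamma_split X d M hM, gammaDown_same X d M hM n y c hc, add_zero]
  congr 1
  simp

theorem gammaUp_bottom (hM : IsAcyclicMatching X d M) (n : ℕ) (z : X (n + 1)) (y : X n)
    (hz : (z, y) ∈ M n) (w : Σ i, X i) :
    GammaUp X d M ⟨n, y⟩ w = -(Ring.inverse (d n z y)) * Gamma X d M ⟨n + 1, z⟩ w := by
  rw [gammaUp_rec X d M hM, Finset.sum_eq_single z]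
  · simp [hz]
  · intro z' _ hne
    rw [if_neg]
    exact fun h => hne (hM.2.2.1 _ _ _ _ h hz)
  · simp

theorem gammaUp_nonbottom (hM : IsAcyclicMatching X d M) (n : ℕ) (y : X n)
    (hy : ∀ z, (z, y) ∉ M n) (w : Σ i, X i) :
    GammaUp X d M ⟨n, y⟩ w = 0 := by
  rw [gammaUp_rec X d M hM]
  exact Finset.sum_eq_zero fun z _ => if_neg (hy z)

/-- A top element has no upward edge. -/
theorem gamma_top (hM : IsAcyclicMatching X d M) (n : ℕ) (z : X (n + 1)) (y : X n)
    (hz : (z, y) ∈ M n) (c : X n) :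
    Gamma X d M ⟨n + 1, z⟩ ⟨n, c⟩ = GammaDown X d M ⟨n + 1, z⟩ ⟨n, c⟩ := by
  rw [gamma_split X d M hM, gammaUp_nonbottom X d M hM (n + 1) z
    (fun a ha => hM.2.2.2.1 _ _ _ _ ha hz), if_neg]
  · simp
  · intro h
    have := congrArg Sigma.fst h
    simp at this

theorem gammaDown_add_matched (hM : IsAcyclicMatching X d M) (n : ℕ) (z : X (n + 1)) (y : X n)
    (hz : (z, y) ∈ M n) (w : Σ i, X i) (F : X n → R) :
    ∑ x, d n z x * F x = (∑ x, if (z, x) ∈ M n then 0 else d n z x * F x) + d n z y * F y := by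
  have h2 : d n z y * F y = ∑ x, if (z, x) ∈ M n then d n z x * F x else 0 := by
    rw [Finset.sum_eq_single y]
    · simp [hz]
    · intro x _ hne
      exact if_neg fun h => hne (hM.2.1 _ _ _ _ h hz)
    · simp
  rw [h2, ← Finset.sum_add_distrib]
  apply Finset.sum_congr rfl
  intro x _
  split_ifs <;> simp

/-- `F ∘ ∂` vanishes on top elements. -/
theorem bdry_top (hM : IsAcyclicMatching X d M) (n : ℕ) (z : X (n + 1)) (y : X n)
    (hz : (z, y) ∈ M n) (c : X n) (hc : CriticalV X M ⟨n, c⟩) :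
    ∑ x, d n z x * Gamma X d M ⟨n, x⟩ ⟨n, c⟩ = 0 := by
  rw [gammaDown_add_matched X d M hM n z y hz ⟨n, c⟩, ← gammaDown_rec X d M hM,
    gamma_same X d M hM n y c hc, gammaUp_bottom X d M hM n z y hz,
    gamma_top X d M hM n z y hz, if_neg]
  · have hu := (hM.2.2.2.2.1 _ _ _ hz).2
    rw [zero_add, ← mul_assoc, mul_neg, Ring.mul_inverse_cancel _ hu]
    simp
  · rintro rfl
    exact (hc _ _ _ hz).2 rfl

/-- `F ∘ ∂` agrees with `Γ↓` on elements which are not top. -/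
theorem bdry_nontop (hM : IsAcyclicMatching X d M) (n : ℕ) (x : X (n + 1))
    (hx : ∀ y, (x, y) ∉ M n) (c : X n) :
    ∑ y, d n x y * Gamma X d M ⟨n, y⟩ ⟨n, c⟩ = GammaDown X d M ⟨n + 1, x⟩ ⟨n, c⟩ := by
  rw [gammaDown_rec X d M hM]
  exact Finset.sum_congr rfl fun y _ => (if_neg (hx y)).symm

theorem main_aux (hC : IsComplexAux X d) (hM : IsAcyclicMatching X d M)
    (i : ℕ) (c : X i) (hc : CriticalV X M ⟨i, c⟩) :
    ∀ (n : ℕ) (x : X (i + 1)), rank X d M ⟨i + 1, x⟩ = n →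
      ∑ c' : Crit X M (i + 1), Gamma X d M ⟨i + 1, x⟩ ⟨i + 1, c'.1⟩ *
          GammaDown X d M ⟨i + 1, c'.1⟩ ⟨i, c⟩ =
        ∑ y, d i x y * Gamma X d M ⟨i, y⟩ ⟨i, c⟩ := by
  intro n
  induction n using Nat.strong_induction_on with
  | _ n ih =>
  intro x hx
  by_cases hb : ∃ z, (z, x) ∈ M (i + 1)
  · obtain ⟨z, hz⟩ := hb
    have h1 : ∀ c' : Crit X M (i + 1), Gamma X d M ⟨i + 1, x⟩ ⟨i + 1, c'.1⟩ =
        -(Ring.inverse (d (i + 1) z x)) *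
          ∑ x', if (z, x') ∈ M (i + 1) then 0 else
            d (i + 1) z x' * Gamma X d M ⟨i + 1, x'⟩ ⟨i + 1, c'.1⟩ := by
      intro c'
      rw [gamma_same X d M hM _ _ _ c'.2, gammaUp_bottom X d M hM _ z x hz,
        gamma_top X d M hM _ z x hz, gammaDown_rec X d M hM, if_neg, zero_add]
      intro h
      exact (c'.2 _ _ _ hz).2 (by rw [h])
    have h2 : ∀ x', (if (z, x') ∈ M (i + 1) then 0 else d (i + 1) z x' *
          ∑ c' : Crit X M (i + 1), Gamma X d M ⟨i + 1, x'⟩ ⟨i + 1, c'.1⟩ *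
            GammaDown X d M ⟨i + 1, c'.1⟩ ⟨i, c⟩) =
        if (z, x') ∈ M (i + 1) then 0 else d (i + 1) z x' *
          ∑ y, d i x' y * Gamma X d M ⟨i, y⟩ ⟨i, c⟩ := by
      intro x'
      split_ifs with hm
      · rfl
      · by_cases h0 : d (i + 1) z x' = 0
        · simp [h0]
        · rw [ih _ _ x' rfl]
          rw [← hx]
          exact (rank_lt X d M hM (MStep.down _ z x' h0 hm)).trans
            (rank_lt X d M hM (MStep.up _ z x hz))
    have h3 : ∑ x', d (i + 1) z x' * ∑ y, d i x' y * Gamma X d M ⟨i, y⟩ ⟨i, c⟩ = 0 := by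
      simp only [Finset.mul_sum]
      rw [Finset.sum_comm]
      apply Finset.sum_eq_zero
      intro y _
      simp only [← mul_assoc]
      rw [← Finset.sum_mul, hC i z y, zero_mul]
    rw [gammaDown_add_matched X d M hM _ z x hz ⟨i, c⟩, ← Finset.sum_congr rfl (fun x' _ => h2 x')] at h3
    have h4 : ∑ c' : Crit X M (i + 1), Gamma X d M ⟨i + 1, x⟩ ⟨i + 1, c'.1⟩ *
          GammaDown X d M ⟨i + 1, c'.1⟩ ⟨i, c⟩ = -(Ring.inverse (d (i + 1) z x)) *
        ∑ x', (if (z, x') ∈ M (i + 1) then 0 else d (i + 1) z x' *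
          ∑ c' : Crit X M (i + 1), Gamma X d M ⟨i + 1, x'⟩ ⟨i + 1, c'.1⟩ *
            GammaDown X d M ⟨i + 1, c'.1⟩ ⟨i, c⟩) := by
      simp only [h1 _, mul_assoc]
      rw [← Finset.mul_sum]
      congr 1
      simp only [Finset.sum_mul]
      rw [Finset.sum_comm]
      apply Finset.sum_congr rfl
      intro x' _
      split_ifs
      · simp
      · simp only [Finset.mul_sum, mul_assoc]
    rw [h4, eq_neg_of_add_eq_zero_left h3, neg_mul_neg, ← mul_assoc,
      Ring.inverse_mul_cancel _ (hM.2.2.2.2.1 _ _ _ hz).2, one_mul]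
  · push Not at hb
    have h1 : ∀ c' : Crit X M (i + 1), Gamma X d M ⟨i + 1, x⟩ ⟨i + 1, c'.1⟩ =
        if x = c'.1 then 1 else 0 := by
      intro c'
      rw [gamma_same X d M hM _ _ _ c'.2, gammaUp_nonbottom X d M hM _ x hb, add_zero]
    simp only [h1]
    by_cases ht : ∃ y, (x, y) ∈ M i
    · obtain ⟨y, hy⟩ := ht
      rw [bdry_top X d M hM i x y hy c hc]
      apply Finset.sum_eq_zero
      intro c' _
      rw [if_neg, zero_mul]
      intro h
      exact (c'.2 _ _ _ hy).1 (by rw [h])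
    · push Not at ht
      rw [bdry_nontop X d M hM i x ht]
      have hcr : CriticalV X M ⟨i + 1, x⟩ := by
        intro j a b hab
        constructor
        · intro h
          cases h
          exact ht _ hab
        · intro h
          cases h
          exact hb _ hab
      rw [Finset.sum_eq_single (⟨x, hcr⟩ : Crit X M (i + 1))]
      · simp
      · intro c' _ hne
        rw [if_neg, zero_mul]
        rintro rfl
        exact hne rfl
      · simp

/-- Lemma B.1 (P2).  If `M` is an acyclic matching on the graph
`G(C)` of the chain complex `C`, then for every matched edge `(α, β) ∈ M` with
`α ∈ X_{i+1}`, `β ∈ X_i`, and every critical basis element `c ∈ X_{i-1}^M`,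
`Γ↓(β,c) = ∑_{c' ∈ X_i^M} Γ↑(β,c') Γ↓(c',c)`.
(Here the degrees are shifted by one: `β` lives in degree `i+1` of our indexing.) -/
theorem gammaDown_eq_sum_gammaUp_gammaDown
    (hC : IsComplexAux X d) (hM : IsAcyclicMatching X d M)
    (i : ℕ) (α : X (i + 2)) (β : X (i + 1)) (hαβ : (α, β) ∈ M (i + 1))
    (c : X i) (hc : CriticalV X M ⟨i, c⟩) :
    GammaDown X d M ⟨i + 1, β⟩ ⟨i, c⟩ =
      ∑ c' : Crit X M (i + 1),
        GammaUp X d M ⟨i + 1, β⟩ ⟨i + 1, c'.1⟩ *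
          GammaDown X d M ⟨i + 1, c'.1⟩ ⟨i, c⟩ := by
  have hb : ∀ y, (β, y) ∉ M i := fun y h => hM.2.2.2.1 _ _ _ _ hαβ h
  rw [← bdry_nontop X d M hM i β hb c, ← main_aux X d M hC hM i c hc _ β rfl]
  apply Finset.sum_congr rfl
  intro c' _
  rw [gamma_same X d M hM _ _ _ c'.2, if_neg, zero_add]
  intro h
  exact (c'.2 _ _ _ hαβ).2 (by rw [h])

end ADMT

end
end

section
/- Let M be an acyclic matching on the graph G(C•) of the chain complex C•. Then the map g is a morphism of complexes: ∂ ∘ g = g ∘ ∂^M in every homological degree. -/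
/-!
Algebraic Discrete Morse theory (Jöllenbeck–Welker).

Setup: `R` is a (possibly noncommutative) ring and `C` is a chain complex of free
left `R`-modules `C i = X i → R` with fixed finite basis `X i` in homological
degree `i`; the differential is `∂ i (c) = ∑ c', d i c c' • c'` (we record only the
matrix of coefficients `d`).  `M` is a matching on the associated weighted directed
graph, `MStep` describes the edges of the modified graph `G_M`, `MPath` the directed
paths, `Gamma v w` the sum of the weights of all paths from `v` to `w`, `Crit` the
critical basis elements, `DMmap` the Morse differential, and `fmap`, `gmap`, `chimap`
the comparison maps and the homotopy.
-/

attribute [local instance] Classical.propDecidable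

noncomputable section

section ADMT

variable {R : Type} [Ring R]
variable (X : ℕ → Type) [∀ i, Fintype (X i)]
variable (d : ∀ i, X (i + 1) → X i → R)
variable (M : ∀ i, Set (X (i + 1) × X i))

/-- `v` is the lower end of a matched edge. -/
def MBot (v : Σ i, X i) : Prop := ∃ t : X (v.1 + 1), (t, v.2) ∈ M v.1

/-- `v` is the upper end of a matched edge. -/
def MTop : (Σ i, X i) → Prop
  | ⟨0, _⟩ => False
  | ⟨i + 1, c⟩ => ∃ b : X i, (c, b) ∈ M i

/-- Degree constraints along directed paths. -/
theorem reach_deg (hM : IsAcyclicMatching X d M) {v w : Σ i, X i}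
    (h : Relation.ReflTransGen (MStep X d M) v w) :
    w.1 ≤ v.1 + 1 ∧ (w.1 = v.1 + 1 → MBot X M v ∧ MTop X M w) ∧
      (¬ MBot X M v → w.1 = v.1 → w = v ∨ MTop X M w) := by
  obtain ⟨_, _, _, h4, _, _⟩ := hM
  induction h using Relation.ReflTransGen.head_induction_on with
  | refl => exact ⟨by omega, fun h => by omega, fun _ _ => Or.inl rfl⟩
  | head hs _ ih =>
    obtain ⟨i1, i2, i3⟩ := ih
    cases hs with
    | down i c c' hne hnm =>
      simp only at i1 i2 i3 ⊢
      refine ⟨by omega, fun h => by omega, fun _ h => Or.inr (i2 h).2⟩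
    | up i c c' hmem =>
      have hnb : ¬ MBot X M ⟨i + 1, c⟩ := by
        rintro ⟨t, ht⟩
        exact h4 i t c c' ht hmem
      simp only at i1 i2 i3 ⊢
      have hle : w.1 ≤ i + 1 := by
        by_contra hcon
        exact hnb (i2 (by omega)).1
      refine ⟨hle, fun h => ⟨⟨c, hmem⟩, ?_⟩, fun hb => absurd ⟨c, hmem⟩ hb⟩
      rcases i3 hnb h with rfl | h
      · exact ⟨c', hmem⟩
      · exact h

theorem reach_finite (hM : IsAcyclicMatching X d M) (v : Σ i, X i) :
    {w | Relation.ReflTransGen (MStep X d M) v w}.Finite := by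
  refine Set.Finite.subset
    (((Finset.range (v.1 + 2)).sigma fun _ => Finset.univ).finite_toSet) ?_
  intro w hw
  have := (reach_deg X d M hM hw).1
  simp only [Finset.coe_sigma, Set.mem_sigma_iff, Finset.coe_range, Set.mem_Iio,
    Finset.coe_univ, Set.mem_univ, and_true]
  omega

/-- The graph `G_M` has no infinite directed path. -/
theorem step_wf (hM : IsAcyclicMatching X d M) :
    WellFounded (fun a b => MStep X d M b a) := by
  refine Subrelation.wf ?_
    (measure fun v => Set.ncard {w | Relation.ReflTransGen (MStep X d M) v w}).wf
  intro a b hab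
  refine Set.ncard_lt_ncard ?_ (reach_finite X d M hM b)
  refine ⟨fun w hw => Relation.ReflTransGen.head hab hw, fun hsub => ?_⟩
  have : Relation.ReflTransGen (MStep X d M) a b := hsub Relation.ReflTransGen.refl
  exact hM.2.2.2.2.2 b (Relation.TransGen.head' hab this)

/-- Paths starting with a downward step. -/
def DownPart : (Σ i, X i) → (Σ i, X i) → Type
  | ⟨0, _⟩, _ => Empty
  | ⟨i + 1, c⟩, w => Σ y : {y : X i // d i c y ≠ 0 ∧ (c, y) ∉ M i}, MPath X d M ⟨i, y.1⟩ w

/-- Paths starting with an upward step. -/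
def UpPart (v w : Σ i, X i) : Type :=
  Σ t : {t : X (v.1 + 1) // (t, v.2) ∈ M v.1}, MPath X d M ⟨v.1 + 1, t.1⟩ w

def encP : ∀ {v w : Σ i, X i}, MPath X d M v w →
    PLift (v = w) ⊕ (DownPart X d M v w ⊕ UpPart X d M v w)
  | _, _, .nil _ => Sum.inl ⟨rfl⟩
  | _, _, .down _ _ c' hne hnm _ p => Sum.inr (Sum.inl ⟨⟨c', hne, hnm⟩, p⟩)
  | _, _, .up _ c _ hmem _ p => Sum.inr (Sum.inr ⟨⟨c, hmem⟩, p⟩)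

def decP : ∀ {v w : Σ i, X i}, PLift (v = w) ⊕ (DownPart X d M v w ⊕ UpPart X d M v w) →
    MPath X d M v w
  | v, _, Sum.inl ⟨h⟩ => h ▸ MPath.nil v
  | ⟨0, _⟩, _, Sum.inr (Sum.inl x) => Empty.elim x
  | ⟨i + 1, c⟩, w, Sum.inr (Sum.inl ⟨y, p⟩) => MPath.down i c y.1 y.2.1 y.2.2 w p
  | ⟨i, c⟩, w, Sum.inr (Sum.inr ⟨t, p⟩) => MPath.up i t.1 c t.2 w p

def equivP (v w : Σ i, X i) : MPath X d M v w ≃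
    PLift (v = w) ⊕ (DownPart X d M v w ⊕ UpPart X d M v w) where
  toFun := encP X d M
  invFun := decP X d M
  left_inv p := by
    cases p with
    | nil => rfl
    | down => rfl
    | up i => cases i <;> rfl
  right_inv x := by
    rcases x with ⟨⟨h⟩⟩ | x | ⟨t, p⟩
    · subst h; rfl
    · obtain ⟨i, c⟩ := v
      cases i with
      | zero => exact Empty.elim x
      | succ i => rfl
    · obtain ⟨i, c⟩ := v
      cases i <;> rfl

theorem path_finite (hM : IsAcyclicMatching X d M) (w v : Σ i, X i) :
    Finite (MPath X d M v w) := by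
  induction v using (step_wf X d M hM).induction with
  | _ v ih =>
    have hd : Finite (DownPart X d M v w) := by
      obtain ⟨i, c⟩ := v
      cases i with
      | zero => exact (inferInstance : Finite Empty)
      | succ i =>
        have : ∀ y : {y : X i // d i c y ≠ 0 ∧ (c, y) ∉ M i},
          Finite (MPath X d M ⟨i, y.1⟩ w) := fun y => ih _ (MStep.down i c y.1 y.2.1 y.2.2)
        exact (inferInstance : Finite (Σ y : {y : X i // d i c y ≠ 0 ∧ (c, y) ∉ M i},
          MPath X d M ⟨i, y.1⟩ w))
    have hu : Finite (UpPart X d M v w) := by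
      have : ∀ t : {t : X (v.1 + 1) // (t, v.2) ∈ M v.1},
          Finite (MPath X d M ⟨v.1 + 1, t.1⟩ w) := fun t => ih _ (MStep.up v.1 t.1 v.2 t.2)
      exact (inferInstance : Finite (Σ t : {t : X (v.1 + 1) // (t, v.2) ∈ M v.1},
        MPath X d M ⟨v.1 + 1, t.1⟩ w))
    exact Finite.of_equiv _ (equivP X d M v w).symm

/-- The part of `∂ c` along non-matched edges. -/
def dpart (i : ℕ) (c : X (i + 1)) : X i → R := fun y => if (c, y) ∈ M i then 0 else d i c y

def downSum : (Σ i, X i) → (Σ i, X i) → R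
  | ⟨0, _⟩, _ => 0
  | ⟨i + 1, c⟩, w => ∑ y, dpart X d M i c y * Gamma X d M ⟨i, y⟩ w

def upSum (v w : Σ i, X i) : R :=
  ∑ t : X (v.1 + 1), if (t, v.2) ∈ M v.1 then
    -(Ring.inverse (d v.1 t v.2)) * Gamma X d M ⟨v.1 + 1, t⟩ w else 0

theorem sum_subtype_aux {α : Type} [Fintype α] (p : α → Prop) [Fintype {a // p a}] (f : α → R) :
    ∑ a : {a // p a}, f a.1 = ∑ a, if p a then f a else 0 := by
  rw [← Finset.sum_filter]
  exact (Finset.sum_subtype _ (by simp) f).symm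

theorem gamma_rec (hM : IsAcyclicMatching X d M) (v w : Σ i, X i) :
    Gamma X d M v w = (if v = w then 1 else 0) + downSum X d M v w + upSum X d M v w := by
  have fin : ∀ v, Finite (MPath X d M v w) := path_finite X d M hM w
  have : ∀ v, Fintype (MPath X d M v w) := fun v => Fintype.ofFinite _
  have : Finite (PLift (v = w) ⊕ (DownPart X d M v w ⊕ UpPart X d M v w)) :=
    Finite.of_equiv _ (equivP X d M v w)
  have : Finite (DownPart X d M v w ⊕ UpPart X d M v w) :=
    Finite.of_injective _ (Sum.inr_injective (α := PLift (v = w)))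
  have : Finite (DownPart X d M v w) :=
    Finite.of_injective _ (Sum.inl_injective (β := UpPart X d M v w))
  have : Finite (UpPart X d M v w) :=
    Finite.of_injective _ (Sum.inr_injective (α := DownPart X d M v w))
  have : Fintype (DownPart X d M v w) := Fintype.ofFinite _
  have : Fintype (UpPart X d M v w) := Fintype.ofFinite _
  have : Fintype (PLift (v = w)) := Fintype.ofFinite _
  have e1 : Gamma X d M v w = ∑ p : MPath X d M v w, MPath.weight X d M p :=
    finsum_eq_sum_of_fintype _
  rw [e1, ← Equiv.sum_comp (equivP X d M v w).symm, Fintype.sum_sum_type,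
    Fintype.sum_sum_type, ← add_assoc]
  congr 1
  · congr 1
    · by_cases h : v = w
      · subst h
        have : Unique (PLift (v = v)) := ⟨⟨⟨rfl⟩⟩, fun _ => rfl⟩
        rw [Fintype.sum_unique, if_pos rfl]
        show MPath.weight X d M (MPath.nil v) = 1
        simp [MPath.weight]
      · have : IsEmpty (PLift (v = w)) := ⟨fun x => h x.down⟩
        rw [if_neg h]
        exact Fintype.sum_empty _
    · obtain ⟨i, c⟩ := v
      cases i with
      | zero =>
        have : IsEmpty (DownPart X d M ⟨0, c⟩ w) := inferInstanceAs (IsEmpty Empty)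
        exact Fintype.sum_empty _
      | succ i =>
        have e2 : ∀ x : DownPart X d M ⟨i + 1, c⟩ w,
            MPath.weight X d M ((equivP X d M ⟨i + 1, c⟩ w).symm (Sum.inr (Sum.inl x)))
              = d i c x.1.1 * MPath.weight X d M x.2 := by
          intro x
          show MPath.weight X d M (MPath.down i c x.1.1 x.1.2.1 x.1.2.2 w x.2) = _
          simp [MPath.weight]
        rw [Finset.sum_congr rfl fun x _ => e2 x]
        have e3 : (∑ x : DownPart X d M ⟨i + 1, c⟩ w, d i c x.1.1 * MPath.weight X d M x.2)
            = ∑ y : {y : X i // d i c y ≠ 0 ∧ (c, y) ∉ M i},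
                ∑ p : MPath X d M ⟨i, y.1⟩ w, d i c y.1 * MPath.weight X d M p := by
          refine Eq.trans ?_ (Fintype.sum_sigma
            (fun x : (Σ y : {y : X i // d i c y ≠ 0 ∧ (c, y) ∉ M i}, MPath X d M ⟨i, y.1⟩ w) =>
              d i c x.1.1 * MPath.weight X d M x.2))
          exact Fintype.sum_equiv (show DownPart X d M ⟨i + 1, c⟩ w ≃
            (Σ y : {y : X i // d i c y ≠ 0 ∧ (c, y) ∉ M i}, MPath X d M ⟨i, y.1⟩ w) from
            Equiv.refl _) _ _ (fun _ => rfl)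
        rw [e3, sum_subtype_aux (fun y => d i c y ≠ 0 ∧ (c, y) ∉ M i)
          (fun y => ∑ p : MPath X d M ⟨i, y⟩ w, d i c y * MPath.weight X d M p)]
        refine Finset.sum_congr rfl fun y _ => ?_
        rw [Gamma, finsum_eq_sum_of_fintype, dpart, ← Finset.mul_sum]
        by_cases h1 : (c, y) ∈ M i <;> by_cases h2 : d i c y = 0 <;> simp [h1, h2]
  · have e2 : ∀ x : UpPart X d M v w,
        MPath.weight X d M ((equivP X d M v w).symm (Sum.inr (Sum.inr x)))
          = -(Ring.inverse (d v.1 x.1.1 v.2)) * MPath.weight X d M x.2 := by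
      intro x
      have : (equivP X d M v w).symm (Sum.inr (Sum.inr x))
          = MPath.up v.1 x.1.1 v.2 x.1.2 w x.2 := by
        obtain ⟨i, c⟩ := v
        cases i <;> rfl
      rw [this]
      simp [MPath.weight]
    rw [Finset.sum_congr rfl fun x _ => e2 x]
    have e3 : (∑ x : UpPart X d M v w,
          -(Ring.inverse (d v.1 x.1.1 v.2)) * MPath.weight X d M x.2)
        = ∑ t : {t : X (v.1 + 1) // (t, v.2) ∈ M v.1},
            ∑ p : MPath X d M ⟨v.1 + 1, t.1⟩ w,
              -(Ring.inverse (d v.1 t.1 v.2)) * MPath.weight X d M p := by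
      refine Eq.trans ?_ (Fintype.sum_sigma
        (fun x : (Σ t : {t : X (v.1 + 1) // (t, v.2) ∈ M v.1}, MPath X d M ⟨v.1 + 1, t.1⟩ w) =>
          -(Ring.inverse (d v.1 x.1.1 v.2)) * MPath.weight X d M x.2))
      exact Fintype.sum_equiv (show UpPart X d M v w ≃
        (Σ t : {t : X (v.1 + 1) // (t, v.2) ∈ M v.1}, MPath X d M ⟨v.1 + 1, t.1⟩ w) from
        Equiv.refl _) _ _ (fun _ => rfl)
    rw [e3, sum_subtype_aux (fun t : X (v.1 + 1) => (t, v.2) ∈ M v.1)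
      (fun t => ∑ p : MPath X d M ⟨v.1 + 1, t⟩ w,
              -(Ring.inverse (d v.1 t v.2)) * MPath.weight X d M p)]
    refine Finset.sum_congr rfl fun t _ => ?_
    rw [Gamma, finsum_eq_sum_of_fintype, ← Finset.mul_sum]

theorem path_reach {v w : Σ i, X i} (p : MPath X d M v w) :
    Relation.ReflTransGen (MStep X d M) v w := by
  induction p with
  | nil => exact Relation.ReflTransGen.refl
  | down i c c' hne hnm w p ih => exact Relation.ReflTransGen.head (MStep.down i c c' hne hnm) ih
  | up i c c' hmem w p ih => exact Relation.ReflTransGen.head (MStep.up i c c' hmem) ih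

theorem gamma_reach {v w : Σ i, X i} (h : Gamma X d M v w ≠ 0) :
    Relation.ReflTransGen (MStep X d M) v w := by
  by_contra hn
  have : IsEmpty (MPath X d M v w) := ⟨fun p => hn (path_reach X d M p)⟩
  exact h (finsum_of_isEmpty _)

theorem downSum_zero (hM : IsAcyclicMatching X d M) (v w : Σ i, X i)
    (h : v.1 < w.1 ∨ (v.1 = w.1 ∧ ¬ MTop X M w)) : downSum X d M v w = 0 := by
  obtain ⟨i, c⟩ := v
  cases i with
  | zero => rfl
  | succ i =>
    refine Finset.sum_eq_zero fun y _ => ?_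
    have : Gamma X d M ⟨i, y⟩ w = 0 := by
      by_contra hne
      obtain ⟨h1, h2, _⟩ := reach_deg X d M hM (gamma_reach X d M hne)
      simp only at h h1 h2
      rcases h with h | ⟨h, ht⟩
      · omega
      · exact ht (h2 h.symm).2
    rw [this, mul_zero]

theorem upSum_zero (v w : Σ i, X i) (h : ¬ MBot X M v) : upSum X d M v w = 0 := by
  refine Finset.sum_eq_zero fun t _ => ?_
  rw [if_neg fun ht => h ⟨t, ht⟩]

theorem upSum_bot (hM : IsAcyclicMatching X d M) (i : ℕ) (v : X i) (t : X (i + 1))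
    (ht : (t, v) ∈ M i) (w : Σ i, X i) :
    upSum X d M ⟨i, v⟩ w = -(Ring.inverse (d i t v)) * Gamma X d M ⟨i + 1, t⟩ w := by
  unfold upSum
  rw [Finset.sum_eq_single t]
  · rw [if_pos ht]
  · intro b _ hb
    rw [if_neg]
    intro hb'
    exact hb (hM.2.2.1 i b t v hb' ht)
  · simp

theorem top_not_bot (hM : IsAcyclicMatching X d M) (i : ℕ) (v : X i) (t : X (i + 1))
    (ht : (t, v) ∈ M i) : ¬ MBot X M ⟨i + 1, t⟩ := by
  rintro ⟨s, hs⟩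
  exact hM.2.2.2.1 i s t v hs ht

theorem crit_not_top {v : Σ i, X i} (h : CriticalV X M v) : ¬ MTop X M v := by
  obtain ⟨i, c⟩ := v
  cases i with
  | zero => exact id
  | succ i =>
    rintro ⟨b, hb⟩
    exact (h i c b hb).1 rfl

theorem crit_not_bot {v : Σ i, X i} (h : CriticalV X M v) : ¬ MBot X M v := by
  rintro ⟨t, ht⟩
  exact (h v.1 t v.2 ht).2 rfl

theorem crit_of {v : Σ i, X i} (h1 : ¬ MTop X M v) (h2 : ¬ MBot X M v) : CriticalV X M v := by
  intro j a b hab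
  constructor
  · rintro rfl
    exact h1 ⟨b, hab⟩
  · rintro rfl
    exact h2 ⟨a, hab⟩

/-- Basis vector. -/
def bv {α : Type} (a : α) : α → R := Pi.single a 1

theorem liftMap_bv {α β : Type} [Fintype α] (w : α → β → R) (a : α) :
    liftMap w (bv a) = w a := by
  funext b
  show ∑ x, (bv a : α → R) x * w x b = _
  simp [bv, Pi.single_apply]

theorem eq_sum_bv {α : Type} [Fintype α] (f : α → R) : f = ∑ a, f a • (bv a : α → R) := by
  funext b
  simp [bv, Pi.single_apply]

/-- `χ ∘ ∂` with the convention that it vanishes in degree `0`. -/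
def xd : ∀ i, (X i → R) →ₗ[R] (X i → R)
  | 0 => 0
  | i + 1 => chimap X d M i ∘ₗ Dmap X d i

theorem DD (hC : IsComplexAux X d) (i : ℕ) (c : X (i + 2)) :
    Dmap X d i (Dmap X d (i + 1) (bv c)) = 0 := by
  unfold Dmap
  rw [liftMap_bv]
  funext b
  exact hC i c b

theorem xd_D (hC : IsComplexAux X d) (i : ℕ) (c : X (i + 1)) :
    xd X d M i (Dmap X d i (bv c)) = 0 := by
  cases i with
  | zero => rfl
  | succ i =>
    show chimap X d M i (Dmap X d i (Dmap X d (i + 1) (bv c))) = 0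
    rw [DD X d hC, map_zero]

theorem chi_not_bot (hM : IsAcyclicMatching X d M) (i : ℕ) (v : X i)
    (h : ¬ MBot X M ⟨i, v⟩) : chimap X d M i (bv v) = 0 := by
  unfold chimap
  rw [liftMap_bv]
  funext w
  by_contra hne
  exact h ((reach_deg X d M hM (gamma_reach X d M hne)).2.1 rfl).1

theorem f_not_bot (hM : IsAcyclicMatching X d M) (i : ℕ) (v : X i)
    (h : ¬ MBot X M ⟨i, v⟩) (h' : ¬ CriticalV X M ⟨i, v⟩) : fmap X d M i (bv v) = 0 := by
  unfold fmap
  rw [liftMap_bv]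
  funext w
  by_contra hne
  rcases (reach_deg X d M hM (gamma_reach X d M hne)).2.2 h rfl with h1 | h1
  · exact h' (h1 ▸ w.2)
  · exact crit_not_top X M w.2 h1

theorem f_crit (hM : IsAcyclicMatching X d M) (i : ℕ) (v : Crit X M i) :
    fmap X d M i (bv v.1) = bv v := by
  unfold fmap
  rw [liftMap_bv]
  funext w
  rw [gamma_rec X d M hM, downSum_zero X d M hM ⟨i, v.1⟩ ⟨i, w.1⟩ (Or.inr ⟨rfl, crit_not_top X M w.2⟩),
    upSum_zero X d M _ _ (crit_not_bot X M v.2)]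
  simp [bv, Pi.single_apply, Subtype.ext_iff, eq_comm]

theorem gamma_not_bot (hM : IsAcyclicMatching X d M) (i : ℕ) (c : X (i + 1))
    (h : ¬ MBot X M ⟨i + 1, c⟩) (w : Σ i, X i) :
    Gamma X d M ⟨i + 1, c⟩ w = (if (⟨i + 1, c⟩ : Σ i, X i) = w then 1 else 0) +
      ∑ y, dpart X d M i c y * Gamma X d M ⟨i, y⟩ w := by
  rw [gamma_rec X d M hM, upSum_zero X d M _ _ h, add_zero]
  rfl

theorem dpart_not_top (i : ℕ) (c : X (i + 1)) (h : ¬ MTop X M ⟨i + 1, c⟩) :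
    dpart X d M i c = Dmap X d i (bv c) := by
  unfold Dmap
  rw [liftMap_bv]
  funext y
  exact if_neg fun hy => h ⟨y, hy⟩

theorem dpart_top (hM : IsAcyclicMatching X d M) (i : ℕ) (c : X (i + 1)) (v : X i)
    (h : (c, v) ∈ M i) :
    Dmap X d i (bv c) = dpart X d M i c + d i c v • bv v := by
  unfold Dmap
  rw [liftMap_bv]
  funext y
  by_cases hy : (c, y) ∈ M i
  · obtain rfl := hM.2.1 i c _ _ h hy
    simp [dpart, bv, h]
  · have : y ≠ v := by
      rintro rfl
      exact hy h
    simp [dpart, bv, hy, Pi.single_apply, this]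

theorem chi_bot (hM : IsAcyclicMatching X d M) (i : ℕ) (v : X i) (t : X (i + 1))
    (ht : (t, v) ∈ M i) : chimap X d M i (bv v) =
      -(Ring.inverse (d i t v)) • (bv t + chimap X d M i (dpart X d M i t)) := by
  unfold chimap
  rw [liftMap_bv]
  funext w
  rw [gamma_rec X d M hM, downSum_zero X d M hM _ _ (Or.inl (Nat.lt_succ_self i)),
    upSum_bot X d M hM i v t ht, gamma_not_bot X d M hM _ _ (top_not_bot X d M hM i v t ht)]
  simp [bv, Pi.single_apply, liftMap, eq_comm]

theorem f_bot (hM : IsAcyclicMatching X d M) (i : ℕ) (v : X i) (t : X (i + 1))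
    (ht : (t, v) ∈ M i) : fmap X d M i (bv v) =
      -(Ring.inverse (d i t v)) • fmap X d M i (dpart X d M i t) := by
  unfold fmap
  rw [liftMap_bv]
  funext w
  have hne : (⟨i, v⟩ : Σ i, X i) ≠ ⟨i, w.1⟩ := by
    intro h
    exact (h ▸ crit_not_bot X M w.2) ⟨t, ht⟩
  rw [gamma_rec X d M hM, downSum_zero X d M hM ⟨i, v⟩ ⟨i, w.1⟩ (Or.inr ⟨rfl, crit_not_top X M w.2⟩),
    upSum_bot X d M hM i v t ht, gamma_not_bot X d M hM _ _ (top_not_bot X d M hM i v t ht),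
    if_neg hne]
  simp [liftMap]

theorem g_crit (hM : IsAcyclicMatching X d M) (i : ℕ) (v : Crit X M i) :
    gmap X d M i (bv v) = bv v.1 + xd X d M i (bv v.1) := by
  unfold gmap
  rw [liftMap_bv]
  cases i with
  | zero =>
    funext w
    rw [gamma_rec X d M hM, upSum_zero X d M _ _ (crit_not_bot X M v.2)]
    simp [downSum, xd, bv, Pi.single_apply, eq_comm]
  | succ i =>
    funext w
    rw [gamma_not_bot X d M hM _ _ (crit_not_bot X M v.2),
      dpart_not_top X d M i _ (crit_not_top X M v.2)]
    simp [xd, bv, Pi.single_apply, chimap, liftMap, eq_comm]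

theorem DM_crit (hM : IsAcyclicMatching X d M) (i : ℕ) (v : Crit X M (i + 1)) :
    DMmap X d M i (bv v) = fmap X d M i (Dmap X d i (bv v.1)) := by
  unfold DMmap
  rw [liftMap_bv]
  funext w
  rw [gamma_not_bot X d M hM _ _ (crit_not_bot X M v.2),
      dpart_not_top X d M i _ (crit_not_top X M v.2)]
  simp [fmap, liftMap]

/-- `g f = id + ∂ χ + χ ∂`. -/
theorem homotopy_bv (hC : IsComplexAux X d) (hM : IsAcyclicMatching X d M) (v : Σ i, X i) :
    gmap X d M v.1 (fmap X d M v.1 (bv v.2)) =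
      bv v.2 + Dmap X d v.1 (chimap X d M v.1 (bv v.2)) + xd X d M v.1 (bv v.2) := by
  induction v using (step_wf X d M hM).transGen.induction with
  | _ v ih =>
    obtain ⟨i, v⟩ := v
    simp only
    by_cases hb : MBot X M ⟨i, v⟩
    · obtain ⟨t, ht⟩ := hb
      simp only at t ht
      have key : gmap X d M i (fmap X d M i (dpart X d M i t)) = dpart X d M i t +
          Dmap X d i (chimap X d M i (dpart X d M i t)) + xd X d M i (dpart X d M i t) := by
        rw [eq_sum_bv (dpart X d M i t)]
        simp only [map_sum, map_smul, ← Finset.sum_add_distrib, ← smul_add]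
        refine Finset.sum_congr rfl fun y _ => ?_
        by_cases hy : dpart X d M i t y = 0
        · rw [hy, zero_smul, zero_smul]
        · have hyM : (t, y) ∉ M i := fun h => hy (if_pos h)
          have hyd : d i t y ≠ 0 := by
            intro h
            exact hy (by simp [dpart, h])
          rw [ih ⟨i, y⟩ ?_]
          exact Relation.TransGen.tail (Relation.TransGen.single (MStep.down i t y hyd hyM))
            (MStep.up i t v ht)
      have hu : IsUnit (d i t v) := (hM.2.2.2.2.1 i t v ht).2
      have hinv : Ring.inverse (d i t v) * d i t v = 1 := Ring.inverse_mul_cancel _ hu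
      have hD := dpart_top X d M hM i t v ht
      have hx : xd X d M i (dpart X d M i t) = - (d i t v • xd X d M i (bv v)) := by
        have := xd_D X d M hC i t
        rw [hD, map_add, map_smul] at this
        exact eq_neg_of_add_eq_zero_left this
      rw [f_bot X d M hM i v t ht, chi_bot X d M hM i v t ht]
      simp only [map_smul, map_add]
      rw [key, hx, hD]
      have h1 : ∀ z : X i → R, Ring.inverse (d i t v) • d i t v • z = z := by
        intro z
        rw [smul_smul, hinv, one_smul]
      simp only [smul_add, smul_neg, neg_smul, h1]
      abel
    · rw [chi_not_bot X d M hM i v hb, map_zero, add_zero]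
      by_cases hc : CriticalV X M ⟨i, v⟩
      · have := f_crit X d M hM i ⟨v, hc⟩
        simp only at this
        rw [this, g_crit X d M hM]
      · rw [f_not_bot X d M hM i v hb hc, map_zero]
        have htop : MTop X M ⟨i, v⟩ := by
          by_contra h
          exact hc (crit_of X M h hb)
        cases i with
        | zero => exact htop.elim
        | succ i =>
          obtain ⟨u, hu⟩ := htop
          show 0 = bv v + chimap X d M i (Dmap X d i (bv v))
          have hun : IsUnit (d i v u) := (hM.2.2.2.2.1 i v u hu).2
          rw [dpart_top X d M hM i v u hu, map_add, map_smul, chi_bot X d M hM i u v hu,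
            smul_smul, mul_neg, Ring.mul_inverse_cancel _ hun, neg_smul, one_smul]
          abel

theorem homotopy (hC : IsComplexAux X d) (hM : IsAcyclicMatching X d M) (i : ℕ) (z : X i → R) :
    gmap X d M i (fmap X d M i z) =
      z + Dmap X d i (chimap X d M i z) + xd X d M i z := by
  rw [eq_sum_bv z]
  simp only [map_sum, map_smul, ← Finset.sum_add_distrib, ← smul_add]
  exact Finset.sum_congr rfl fun y _ => by rw [homotopy_bv X d M hC hM ⟨i, y⟩]

/-- Lemma B.2 (C2).  If `M` is an acyclic matching on the graph
`G(C)` of the chain complex `C`, then `g` is a morphism of complexes: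
`∂ ∘ g = g ∘ ∂^M` in every homological degree. -/
theorem gmap_chain_map
    (hC : IsComplexAux X d) (hM : IsAcyclicMatching X d M) :
    ∀ i, Dmap X d i ∘ₗ gmap X d M (i + 1) = gmap X d M i ∘ₗ DMmap X d M i := by
  intro i
  refine LinearMap.ext fun z => ?_
  rw [eq_sum_bv z]
  simp only [map_sum, map_smul]
  refine Finset.sum_congr rfl fun c _ => ?_
  congr 1
  show Dmap X d i (gmap X d M (i + 1) (bv c)) = gmap X d M i (DMmap X d M i (bv c))
  rw [DM_crit X d M hM, homotopy X d M hC hM, g_crit X d M hM, xd_D X d M hC, map_add, add_zero]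
  rfl


end ADMT

end
end
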